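/- Let (Q, Σ) be a DFA with n = |Q| satisfying hypothesis (H). Let p₁, p₂, p₃ be pairwise distinct states, b, a, d ∈ Σ letters, and q ∈ Q∖{p₁, p₂} a state such that: Qb = Q∖{p₁}, p₁b = p₂b, Qa = Q, p₁a = p₂, p₂a = p₁, Qd = Q, p₁d = p₁, p₃d = p₂, p₂d ≠ p₃, qb ≠ p₁, Q(bad) = Q∖{q}, and Q(badb) = Q∖{p₁, qb}. Then there exists a word w over Σ with |w| ≤ 9 and |Qw| ≤ n − 3. -/

import Mathlib

/-- The image of a finite set of states `R` under a word (list of letters),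
where each letter `s` acts on states via `act s`. -/
def wordImage {Q A : Type*} [DecidableEq Q] (act : A → Q → Q) (R : Finset Q) :
    List A → Finset Q
  | [] => R
  | s :: w => wordImage act (R.image (act s)) w

/-!
Instead of images we track the missing states. Permutation letters permute the missing sets, and
`b` costs a further state as soon as `p₁` and `p₂`, which it merges, are both present. Since `b`
merges no other pair, the states missing after `badb` are `p₁` and some `r`. It remains to move
`{p₁, r}` off `{p₁, p₂}` with at most four letters `a`, `d`, after which one more `b` brings the
total to nine letters. The two ways in which `ad` can fail to do this, `r = p₂` and `r a = p₃`,
are repaired by inserting further letters `d`.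
-/

open Finset Function

section Functions

variable {α β : Type*} [DecidableEq α] [DecidableEq β] {f : α → β}

theorem disjoint_image_pair_iff (hf : Injective f) {x y : α} {x' y' : β} (hx : f x = x')
    (hy : f y = y') (R : Finset α) : Disjoint (R.image f) {x', y'} ↔ Disjoint R {x, y} := by
  rw [← disjoint_image hf (t := {x, y}), image_insert, image_singleton, hx, hy]

variable [Fintype α]

theorem bijective_of_image_univ_eq_univ {f : α → α} (hf : univ.image f = univ) : Bijective f :=
  Finite.surjective_iff_bijective.mp fun y => by simpa using hf.ge (mem_univ y)

theorem image_compl_of_bijective [Fintype β] (hf : Bijective f) (R : Finset α) :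
    Rᶜ.image f = (R.image f)ᶜ := by
  rw [← coe_inj]
  push_cast
  exact Set.image_compl_eq hf

theorem injOn_compl_singleton_of_apply_eq {x y : α} (hxy : x ≠ y) (hf : f x = f y)
    (hcard : (univ.image f).card = Fintype.card α - 1) :
    Set.InjOn f ({x}ᶜ : Finset α) := by
  have himage : ({x}ᶜ : Finset α).image f = univ.image f := by
    have hfx : f x ∈ ({x}ᶜ : Finset α).image f :=
      mem_image.mpr ⟨y, by simpa using hxy.symm, hf.symm⟩
    rw [← insert_compl_self x, image_insert, insert_eq_of_mem hfx]
  exact injOn_of_card_image_eq <| by rw [himage, hcard, card_compl, card_singleton]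

theorem eq_of_apply_eq_of_notMem_pair {x y z t : α} (hxy : x ≠ y) (hf : f x = f y)
    (hcard : (univ.image f).card = Fintype.card α - 1) (hz : z ∉ ({x, y} : Finset α))
    (htz : f t = f z) : t = z := by
  simp only [mem_insert, mem_singleton, not_or] at hz
  have hinj := injOn_compl_singleton_of_apply_eq hxy hf hcard
  by_cases htx : t = x
  · have hyz : f y = f z := by rw [← hf, ← htx, htz]
    exact absurd (hinj (by simpa using hxy.symm) (by simpa using hz.1) hyz).symm hz.2
  · exact hinj (by simpa using htx) (by simpa using hz.1) htz

theorem image_compl_singleton_of_forall_apply_eq {z : α} (hz : ∀ t, f t = f z → t = z) :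
    ({z}ᶜ : Finset α).image f = (univ.image f).erase (f z) := by
  ext y
  simp only [mem_image, mem_compl, mem_singleton, mem_erase, mem_univ, true_and]
  constructor
  · rintro ⟨t, htz, rfl⟩
    exact ⟨fun h => htz (hz t h), t, rfl⟩
  · rintro ⟨hne, t, rfl⟩
    exact ⟨t, fun h => hne (congrArg f h), rfl⟩

end Functions

section Words

variable {Q A : Type*} [DecidableEq Q] {act : A → Q → Q}

theorem wordImage_append (R : Finset Q) (u v : List A) :
    wordImage act R (u ++ v) = wordImage act (wordImage act R u) v := by
  induction u generalizing R with
  | nil => rfl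
  | cons _ _ ih => exact ih _

theorem card_wordImage_le (R : Finset Q) (w : List A) : (wordImage act R w).card ≤ R.card := by
  induction w generalizing R with
  | nil => rfl
  | cons s w ih => exact (ih _).trans card_image_le

theorem wordImage_compl_of_bijective [Fintype Q] {w : List A}
    (hw : ∀ s ∈ w, Bijective (act s)) (R : Finset Q) :
    wordImage act Rᶜ w = (wordImage act R w)ᶜ := by
  induction w generalizing R with
  | nil => rfl
  | cons s w ih =>
    rw [List.forall_mem_cons] at hw
    simp only [wordImage, image_compl_of_bijective hw.1, ih hw.2]

theorem card_wordImage_append_singleton_lt {R : Finset Q} {w : List A} {x y : Q} {s : A}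
    (hxy : x ≠ y) (hs : act s x = act s y) (hx : x ∈ wordImage act R w)
    (hy : y ∈ wordImage act R w) : (wordImage act R (w ++ [s])).card < R.card := by
  rw [wordImage_append]
  refine lt_of_lt_of_le (card_image_le.lt_of_ne fun hcard => ?_) (card_wordImage_le R w)
  exact hxy (injOn_of_card_image_eq hcard hx hy hs)

end Words

section ThreeLetters

variable {Q A : Type*} [DecidableEq Q] {act : A → Q → Q} {p₁ p₂ p₃ : Q} {a b d : A}

theorem wordImage_univ_badb [Fintype Q] (hp12 : p₁ ≠ p₂)
    (hb : univ.image (act b) = {p₁}ᶜ) (hb12 : act b p₁ = act b p₂)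
    (ha : Bijective (act a)) (ha1 : act a p₁ = p₂) (hd : Bijective (act d))
    (hq : act d p₂ ∉ ({p₁, p₂} : Finset Q)) :
    wordImage act univ [b, a, d, b] = {p₁, act b (act d p₂)}ᶜ := by
  have hcard : (univ.image (act b)).card = Fintype.card Q - 1 := by
    rw [hb, card_compl, card_singleton]
  calc wordImage act univ [b, a, d, b]
      = ({act d p₂}ᶜ : Finset Q).image (act b) := by
        simp only [wordImage, hb, image_compl_of_bijective ha, image_compl_of_bijective hd,
          image_singleton, ha1]
    _ = ({p₁}ᶜ : Finset Q).erase (act b (act d p₂)) := by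
        rw [image_compl_singleton_of_forall_apply_eq fun _ =>
          eq_of_apply_eq_of_notMem_pair hp12 hb12 hcard hq, hb]
    _ = {p₁, act b (act d p₂)}ᶜ := by rw [← compl_insert, pair_comm]

theorem disjoint_wordImage_ad (hp12 : p₁ ≠ p₂) (hp23 : p₂ ≠ p₃) (ha : Injective (act a))
    (ha1 : act a p₁ = p₂) (ha2 : act a p₂ = p₁) (hd : Injective (act d))
    (hd1 : act d p₁ = p₁) (hd3 : act d p₃ = p₂) {x : Q} (hx : x ≠ p₂) (hxa : act a x ≠ p₃) :
    Disjoint (wordImage act {p₁, x} [a, d]) {p₁, p₂} := by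
  have hxa₁ : act a x ≠ p₁ := (ha.ne_iff' ha2).mpr hx
  refine (disjoint_image_pair_iff hd hd1 hd3 _).mpr ?_
  simp [ha1, hp12, hxa₁.symm, hp23.symm, hxa.symm]

theorem exists_word_disjoint_wordImage_pair (hp12 : p₁ ≠ p₂) (hp23 : p₂ ≠ p₃)
    (ha : Injective (act a)) (ha1 : act a p₁ = p₂) (ha2 : act a p₂ = p₁)
    (hd : Injective (act d)) (hd1 : act d p₁ = p₁) (hd3 : act d p₃ = p₂)
    (hd2 : act d p₂ ≠ p₃) (r : Q) :
    ∃ u ⊆ [a, d], u.length ≤ 4 ∧ Disjoint (wordImage act {p₁, r} u) {p₁, p₂} := by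
  have hq₁ : act d p₂ ≠ p₁ := (hd.ne_iff' hd1).mpr hp12.symm
  have hq₂ : act d p₂ ≠ p₂ := (hd.ne_iff' hd3).mpr hp23
  have disjoint_ad {x : Q} (hx : x ≠ p₂) (hxa : act a x ≠ p₃) :
      Disjoint (wordImage act {p₁, x} [a, d]) {p₁, p₂} :=
    disjoint_wordImage_ad hp12 hp23 ha ha1 ha2 hd hd1 hd3 hx hxa
  by_cases hr : r = p₂
  · subst hr
    by_cases hqa : act a (act d r) = p₃
    · have hqd₂ : act d (act d r) ≠ r := (hd.ne_iff' hd3).mpr hd2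
      have hqda : act a (act d (act d r)) ≠ p₃ := (ha.ne_iff' hqa).mpr (hd.ne hq₂)
      exact ⟨[d, d, a, d], by simp, by simp, by
        simpa [wordImage, hd1] using disjoint_ad hqd₂ hqda⟩
    · exact ⟨[d, a, d], by simp, by simp, by simpa [wordImage, hd1] using disjoint_ad hq₂ hqa⟩
  · by_cases hra : act a r = p₃
    · refine ⟨[a, d, d], by simp, by simp, (disjoint_image_pair_iff hd hd1 hd3 _).mpr ?_⟩
      simp [ha1, hra, hd3, hq₁.symm, hp12, hd2.symm, hp23.symm]
    · exact ⟨[a, d], by simp, by simp, disjoint_ad hr hra⟩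

end ThreeLetters

theorem stmt_17_general {Q A : Type*} [Fintype Q] [DecidableEq Q] (act : A → Q → Q)
    {p₁ p₂ p₃ : Q} (hp12 : p₁ ≠ p₂) (hp23 : p₂ ≠ p₃) {b a d : A}
    (hb : univ.image (act b) = {p₁}ᶜ) (hb12 : act b p₁ = act b p₂)
    (ha : Bijective (act a)) (ha1 : act a p₁ = p₂) (ha2 : act a p₂ = p₁)
    (hd : Bijective (act d)) (hd1 : act d p₁ = p₁) (hd3 : act d p₃ = p₂)
    (hd2 : act d p₂ ≠ p₃) :
    ∃ w : List A, w.length ≤ 9 ∧ (wordImage act univ w).card ≤ Fintype.card Q - 3 := by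
  have hq : act d p₂ ∉ ({p₁, p₂} : Finset Q) := by
    simpa using And.intro ((hd.1.ne_iff' hd1).mpr hp12.symm) ((hd.1.ne_iff' hd3).mpr hp23)
  have hbadb := wordImage_univ_badb hp12 hb hb12 ha ha1 hd hq
  set r := act b (act d p₂)
  have hr : p₁ ≠ r := by
    have hr_mem : r ∈ ({p₁}ᶜ : Finset Q) := hb ▸ mem_image_of_mem _ (mem_univ _)
    simpa [eq_comm] using hr_mem
  obtain ⟨u, hu_sub, hu_len, hu_disj⟩ :=
    exists_word_disjoint_wordImage_pair hp12 hp23 ha.1 ha1 ha2 hd.1 hd1 hd3 hd2 r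
  have hu_bij : ∀ s ∈ u, Bijective (act s) := fun s hs => by
    rcases List.mem_pair.mp (hu_sub hs) with rfl | rfl <;> assumption
  have hu_mem : {p₁, p₂} ⊆ wordImage act {p₁, r}ᶜ u := by
    rw [wordImage_compl_of_bijective hu_bij]
    exact subset_compl_iff_disjoint_left.mpr hu_disj
  have hlt : (wordImage act {p₁, r}ᶜ (u ++ [b])).card < ({p₁, r}ᶜ : Finset Q).card :=
    card_wordImage_append_singleton_lt hp12 hb12 (hu_mem (by simp)) (hu_mem (by simp))
  rw [card_compl, card_pair hr] at hlt
  refine ⟨[b, a, d, b] ++ (u ++ [b]), ?_, ?_⟩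
  · simp only [List.length_append, List.length_cons, List.length_nil]
    omega
  · rw [wordImage_append, hbadb]
    omega

theorem stmt_17 {Q A : Type*} [Fintype Q] [DecidableEq Q] (act : A → Q → Q)
    (hH1 : ∃ w : List A, (wordImage act Finset.univ w).card ≤ Fintype.card Q - 2)
    (hH2 : ∀ w : List A, w.length ≤ 3 →
      Fintype.card Q - 2 < (wordImage act Finset.univ w).card)
    (p₁ p₂ p₃ : Q) (hp12 : p₁ ≠ p₂) (hp13 : p₁ ≠ p₃) (hp23 : p₂ ≠ p₃)
    (b a d : A) (q : Q) (hq₁ : q ≠ p₁) (hq₂ : q ≠ p₂)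
    (hb : Finset.univ.image (act b) = Finset.univ \ {p₁})
    (hb12 : act b p₁ = act b p₂)
    (ha : Finset.univ.image (act a) = Finset.univ)
    (ha1 : act a p₁ = p₂) (ha2 : act a p₂ = p₁)
    (hd : Finset.univ.image (act d) = Finset.univ)
    (hd1 : act d p₁ = p₁) (hd3 : act d p₃ = p₂) (hd2 : act d p₂ ≠ p₃)
    (hqb : act b q ≠ p₁)
    (hbad : wordImage act Finset.univ [b, a, d] = Finset.univ \ {q})
    (hbadb : wordImage act Finset.univ [b, a, d, b] = Finset.univ \ {p₁, act b q}) :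
    ∃ w : List A, w.length ≤ 9 ∧
      (wordImage act Finset.univ w).card ≤ Fintype.card Q - 3 := by
  exact stmt_17_general act hp12 hp23 (hb.trans (compl_eq_univ_sdiff _).symm) hb12
    (bijective_of_image_univ_eq_univ ha) ha1 ha2 (bijective_of_image_univ_eq_univ hd) hd1 hd3 hd2
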